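/- Let S be a nonempty closed subset of Euclidean space ℝ^d, let x ∈ ℝ^d, and let p ∈ S be a nearest point of S to x, i.e. dist(x, p) = infDist(x, S). Then for every t ∈ [0, 1], the point y = x + t • (p − x) on the segment from x to p also has p as a nearest point of S, i.e. dist(y, p) = infDist(y, S). -/

import Mathlib

theorem dist_eq_infDist_of_dist_add_dist_eq {X : Type*} [PseudoMetricSpace X]
    {S : Set X} {x y p : X} (hp : p ∈ S) (hxp : dist x p = Metric.infDist x S)
    (hy : dist x y + dist y p = dist x p) :
    dist y p = Metric.infDist y S := by
  refine le_antisymm ?_ (Metric.infDist_le_dist_of_mem hp)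
  have hle : dist x y + dist y p ≤ dist x y + Metric.infDist y S :=
    calc
      dist x y + dist y p = Metric.infDist x S := hy.trans hxp
      _ ≤ Metric.infDist y S + dist x y := Metric.infDist_le_infDist_add_dist
      _ = dist x y + Metric.infDist y S := add_comm _ _
  exact le_of_add_le_add_left hle

theorem closest_point_constant_along_normal_segment_general
    {E P : Type*} [SeminormedAddCommGroup E] [NormedSpace ℝ E]
    [PseudoMetricSpace P] [NormedAddTorsor E P]
    {S : Set P} {x y p : P} (hp : p ∈ S) (hxp : dist x p = Metric.infDist x S)
    (hy : Wbtw ℝ x y p) :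
    dist y p = Metric.infDist y S :=
  dist_eq_infDist_of_dist_add_dist_eq hp hxp hy.dist_add_dist

/-- If `p ∈ S` is a nearest point of the nonempty closed set
`S ⊆ ℝ^d` to `x`, then every point `y = x + t • (p - x)` on the segment from
`x` to `p` (for `t ∈ [0,1]`) also has `p` as a nearest point of `S`. -/
theorem closest_point_constant_along_normal_segment
    {d : ℕ} (S : Set (EuclideanSpace ℝ (Fin d)))
    (hS : S.Nonempty) (hSclosed : IsClosed S)
    (x p : EuclideanSpace ℝ (Fin d)) (hp : p ∈ S)
    (hdist : dist x p = Metric.infDist x S) :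
    ∀ t ∈ Set.Icc (0 : ℝ) 1,
      dist (x + t • (p - x)) p = Metric.infDist (x + t • (p - x)) S := fun t ht =>
  closest_point_constant_along_normal_segment_general hp hdist
    ⟨t, ht, by rw [AffineMap.lineMap_apply, vsub_eq_sub, vadd_eq_add, add_comm]⟩
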